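/- arXiv:2502.09003 — 2 statements merged into one kernel-verified Lean document; each statement's English description precedes it below -/
import Mathlib

section
/- Second-moment bound for the quantized-iterate increment (bound on E[(p₂ᵗ)²] in the proof of Theorem 1). For every step size η > 0 and every current weight v : Fin d → ℝ: (1/N) · ∑_{j} ‖Q_w(R.mulVec (v⁺(j))) − Q_w(R.mulVec v)‖_G² ≤ 3η²ρ · ‖Q_w(R.mulVec v) − w⋆‖_G² + 3 · (1/N) · ∑_{j} ‖e(R.mulVec (v⁺(j)))‖_G² + 3 · ‖e(R.mulVec v)‖_G². -/
/-!
Since `‖x‖_G² = (1/N) ∑ i, (q i ⬝ᵥ x)²` (`wnormSq_gram`), the `G`-seminorm satisfies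
`‖a - b - c‖_G² ≤ 3 (‖a‖_G² + ‖b‖_G² + ‖c‖_G²)` (`wnormSq_gram_sub_sub_le`). As `R Rᵀ = 1`, the
rotated increment is `R v⁺(j) - R v = -c_j q_j` with `c_j = η q_j ⬝ᵥ (Q_w(R v) - w⋆)`, so the
quantized increment is `e(R v⁺(j)) - c_j q_j - e(R v)`. The middle term has squared seminorm
`c_j² ‖q_j‖_G² ≤ η² ρ (q_j ⬝ᵥ (Q_w(R v) - w⋆))²`, whose average over `j` is
`η² ρ ‖Q_w(R v) - w⋆‖_G²`.
-/

open Matrix Finset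

noncomputable section

/-- The (empirical) Gram matrix of the quantized-rotated features. -/
def gram (d N : ℕ) (q : Fin N → Fin d → ℝ) : Matrix (Fin d) (Fin d) ℝ :=
  (N : ℝ)⁻¹ • ∑ i, Matrix.vecMulVec (q i) (q i)

/-- `K`-weighted squared (semi-)norm `‖v‖_K² = v ⬝ᵥ K v`. -/
def wnormSq {d : ℕ} (K : Matrix (Fin d) (Fin d) ℝ) (v : Fin d → ℝ) : ℝ :=
  v ⬝ᵥ K.mulVec v

/-- Quantization error `e(v) = Q_w(v) - v`. -/
def qerr {d : ℕ} (Qw : (Fin d → ℝ) → Fin d → ℝ) (v : Fin d → ℝ) : Fin d → ℝ :=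
  Qw v - v

/-- The rotated STE update at sample `j`. -/
def steUpdate {d N : ℕ} (q : Fin N → Fin d → ℝ) (y : Fin N → ℝ)
    (Qw : (Fin d → ℝ) → Fin d → ℝ) (R : Matrix (Fin d) (Fin d) ℝ) (η : ℝ)
    (v : Fin d → ℝ) (j : Fin N) : Fin d → ℝ :=
  v - (η * ((q j ⬝ᵥ Qw (R.mulVec v)) - y j)) • Rᵀ.mulVec (q j)


theorem wnormSq_gram {d N : ℕ} (q : Fin N → Fin d → ℝ) (x : Fin d → ℝ) :
    wnormSq (gram d N q) x = (N : ℝ)⁻¹ * ∑ i, (q i ⬝ᵥ x) ^ 2 := by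
  simp only [wnormSq, _root_.gram, Matrix.smul_mulVec, Matrix.sum_mulVec, Matrix.vecMulVec_mulVec,
    dotProduct_smul, dotProduct_sum, smul_eq_mul]
  congr 1
  refine Finset.sum_congr rfl fun i _ => ?_
  simp [dotProduct_comm x (q i), sq]

theorem wnormSq_smul {d : ℕ} (K : Matrix (Fin d) (Fin d) ℝ) (c : ℝ) (x : Fin d → ℝ) :
    wnormSq K (c • x) = c ^ 2 * wnormSq K x := by
  simp only [wnormSq, Matrix.mulVec_smul, dotProduct_smul, smul_dotProduct, smul_eq_mul]
  ring

theorem wnormSq_gram_sub_sub_le {d N : ℕ} (q : Fin N → Fin d → ℝ) (a b c : Fin d → ℝ) :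
    wnormSq (gram d N q) (a - b - c) ≤ 3 * wnormSq (gram d N q) b
      + 3 * wnormSq (gram d N q) a + 3 * wnormSq (gram d N q) c := by
  simp only [wnormSq_gram, dotProduct_sub]
  have h : ∑ i, (q i ⬝ᵥ a - q i ⬝ᵥ b - q i ⬝ᵥ c) ^ 2 ≤
      3 * ∑ i, (q i ⬝ᵥ b) ^ 2 + 3 * ∑ i, (q i ⬝ᵥ a) ^ 2 + 3 * ∑ i, (q i ⬝ᵥ c) ^ 2 := by
    simp only [Finset.mul_sum, ← Finset.sum_add_distrib]
    refine Finset.sum_le_sum fun i _ => ?_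
    nlinarith [sq_nonneg (q i ⬝ᵥ a + q i ⬝ᵥ b), sq_nonneg (q i ⬝ᵥ a + q i ⬝ᵥ c),
      sq_nonneg (q i ⬝ᵥ b - q i ⬝ᵥ c)]
  have hN : (0 : ℝ) ≤ (N : ℝ)⁻¹ := by positivity
  linarith [mul_le_mul_of_nonneg_left h hN]

/-- In rotated coordinates the STE step is a plain gradient step along `q j`. -/
theorem mulVec_steUpdate {d N : ℕ} (q : Fin N → Fin d → ℝ) (y : Fin N → ℝ)
    (Qw : (Fin d → ℝ) → Fin d → ℝ) (R : Matrix (Fin d) (Fin d) ℝ) (hR1 : R * Rᵀ = 1)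
    (η : ℝ) (v : Fin d → ℝ) (j : Fin N) :
    R.mulVec (steUpdate q y Qw R η v j) =
      R.mulVec v - (η * ((q j ⬝ᵥ Qw (R.mulVec v)) - y j)) • q j := by
  rw [steUpdate, Matrix.mulVec_sub, Matrix.mulVec_smul, Matrix.mulVec_mulVec, hR1,
    Matrix.one_mulVec]

/-- Second-moment bound for the quantized-iterate increment (bound on `E[(p₂ᵗ)²]`). -/
theorem roste_second_moment_bound (d N : ℕ) (hd : 1 ≤ d) (hN : 1 ≤ N)
    (q : Fin N → Fin d → ℝ) (y : Fin N → ℝ)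
    (wstar : Fin d → ℝ) (hinterp : ∀ i, y i = q i ⬝ᵥ wstar)
    (Qw : (Fin d → ℝ) → Fin d → ℝ)
    (R : Matrix (Fin d) (Fin d) ℝ) (hR1 : R * Rᵀ = 1) (hR2 : Rᵀ * R = 1)
    (lam ρ : ℝ) (hlam : 0 < lam) (hρ : 0 < ρ)
    (hG2 : (gram d N q * gram d N q - lam • gram d N q).PosSemidef)
    (hqG : ∀ i, q i ⬝ᵥ (gram d N q).mulVec (q i) ≤ ρ)
    (η : ℝ) (hη0 : 0 < η)
    (v : Fin d → ℝ) :
    (1 / (N : ℝ)) *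
        ∑ j, wnormSq (gram d N q)
          (Qw (R.mulVec (steUpdate q y Qw R η v j)) - Qw (R.mulVec v))
      ≤ 3 * η ^ 2 * ρ * wnormSq (gram d N q) (Qw (R.mulVec v) - wstar)
        + 3 * ((1 / (N : ℝ)) *
            ∑ j, wnormSq (gram d N q) (qerr Qw (R.mulVec (steUpdate q y Qw R η v j))))
        + 3 * wnormSq (gram d N q) (qerr Qw (R.mulVec v)) := by
  have key : ∀ j, wnormSq (gram d N q)
      (Qw (R.mulVec (steUpdate q y Qw R η v j)) - Qw (R.mulVec v)) ≤
      3 * η ^ 2 * ρ * (q j ⬝ᵥ (Qw (R.mulVec v) - wstar)) ^ 2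
        + 3 * wnormSq (gram d N q) (qerr Qw (R.mulVec (steUpdate q y Qw R η v j)))
        + 3 * wnormSq (gram d N q) (qerr Qw (R.mulVec v)) := by
    intro j
    have hdec : Qw (R.mulVec (steUpdate q y Qw R η v j)) - Qw (R.mulVec v) =
        qerr Qw (R.mulVec (steUpdate q y Qw R η v j))
          - (η * (q j ⬝ᵥ (Qw (R.mulVec v) - wstar))) • q j - qerr Qw (R.mulVec v) := by
      have hstep := mulVec_steUpdate q y Qw R hR1 η v j
      rw [hinterp j, ← dotProduct_sub] at hstep
      simp only [qerr]
      -- only the occurrence outside `Qw` is expanded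
      generalize Qw (R.mulVec (steUpdate q y Qw R η v j)) = z
      rw [hstep]
      abel
    rw [hdec]
    refine (wnormSq_gram_sub_sub_le q _ _ _).trans ?_
    rw [wnormSq_smul]
    have h := mul_le_mul_of_nonneg_left (hqG j)
      (sq_nonneg (η * (q j ⬝ᵥ (Qw (R.mulVec v) - wstar))))
    change _ * wnormSq (gram d N q) (q j) ≤ _ at h
    linarith
  have hN0 : (N : ℝ) ≠ 0 := by
    exact_mod_cast Nat.one_le_iff_ne_zero.mp hN
  calc _ ≤ (1 / (N : ℝ)) * ∑ j, (3 * η ^ 2 * ρ * (q j ⬝ᵥ (Qw (R.mulVec v) - wstar)) ^ 2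
        + 3 * wnormSq (gram d N q) (qerr Qw (R.mulVec (steUpdate q y Qw R η v j)))
        + 3 * wnormSq (gram d N q) (qerr Qw (R.mulVec v))) := by
        gcongr with j
        exact key j
    _ = _ := by
        rw [wnormSq_gram q (Qw (R.mulVec v) - wstar)]
        simp only [Finset.sum_add_distrib, ← Finset.mul_sum, Finset.sum_const,
          Finset.card_univ, Fintype.card_fin, nsmul_eq_mul]
        field_simp
end
end

section
/- Weighted second-moment bound used in the proof of Theorem 1: if q i ⬝ᵥ G.mulVec (q i) ≤ ρ for every i, then for every v : Fin d → ℝ, (1/N) · ∑_{j} ((q j ⬝ᵥ v) − y j)² · (q j ⬝ᵥ G.mulVec (q j)) ≤ ρ · (v − w⋆) ⬝ᵥ G.mulVec (v − w⋆). -/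
open Matrix Finset

noncomputable section

/-- The quadratic form of the Gram matrix is the empirical second moment of the projections. -/
theorem dotProduct_gram_mulVec (d N : ℕ) (q : Fin N → Fin d → ℝ) (u : Fin d → ℝ) :
    u ⬝ᵥ (gram d N q).mulVec u = (N : ℝ)⁻¹ * ∑ j, (q j ⬝ᵥ u) ^ 2 := by
  simp only [_root_.gram, Matrix.smul_mulVec, Matrix.sum_mulVec, Matrix.vecMulVec_mulVec,
    dotProduct_smul, dotProduct_sum, smul_eq_mul, op_smul_eq_smul]
  congr 1
  refine Finset.sum_congr rfl fun j _ => ?_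
  rw [dotProduct_comm u, sq]

/-- Weighted second-moment bound used in the proof of Theorem 1. -/
theorem weighted_second_moment_bound (d N : ℕ) (hd : 1 ≤ d) (hN : 1 ≤ N)
    (q : Fin N → Fin d → ℝ) (y : Fin N → ℝ)
    (wstar : Fin d → ℝ) (hinterp : ∀ i, y i = q i ⬝ᵥ wstar)
    (ρ : ℝ) (hqG : ∀ i, q i ⬝ᵥ (gram d N q).mulVec (q i) ≤ ρ)
    (v : Fin d → ℝ) :
    (1 / (N : ℝ)) *
        ∑ j, ((q j ⬝ᵥ v) - y j) ^ 2 * (q j ⬝ᵥ (gram d N q).mulVec (q j))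
      ≤ ρ * ((v - wstar) ⬝ᵥ (gram d N q).mulVec (v - wstar)) := by
  -- By interpolation the residuals are the projections of `v - wstar`, so bounding each
  -- weight by `ρ` leaves `ρ` times the Gram quadratic form.
  have hres : ∀ j, q j ⬝ᵥ v - y j = q j ⬝ᵥ (v - wstar) := fun j => by
    rw [hinterp, dotProduct_sub]
  rw [dotProduct_gram_mulVec d N q (v - wstar), one_div, mul_left_comm, Finset.mul_sum _ _ ρ]
  refine mul_le_mul_of_nonneg_left (Finset.sum_le_sum fun j _ => ?_) (by positivity)
  rw [hres, mul_comm]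
  exact mul_le_mul_of_nonneg_right (hqG j) (sq_nonneg _)
end
end
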